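/- For any n-by-n complex matrix A, d(A) = min over θ ∈ ℝ of i_{≥0}(Re(e^{−iθ}A)), where the minimum is attained. -/

import Mathlib

open Matrix Polynomial

noncomputable def zdi {m : Type*} [Fintype m] (A : Matrix m m ℂ) : ℕ :=
  sSup {k : ℕ | ∃ V : Matrix m (Fin k) ℂ, Vᴴ * V = 1 ∧ Vᴴ * A * V = 0}

noncomputable def matRe {m : Type*} (A : Matrix m m ℂ) : Matrix m m ℂ :=
  (2⁻¹ : ℂ) • (A + Aᴴ)

noncomputable def iNonneg {m : Type*} [Fintype m] [DecidableEq m] (M : Matrix m m ℂ) : ℕ :=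
  if hM : M.IsHermitian then (Finset.univ.filter fun i => 0 ≤ hM.eigenvalues i).card else 0

def numRange {m : Type*} [Fintype m] (A : Matrix m m ℂ) : Set ℂ :=
  {z | ∃ x : m → ℂ, star x ⬝ᵥ x = 1 ∧ star x ⬝ᵥ A.mulVec x = z}

noncomputable def arg2pi (z : ℂ) : ℝ :=
  if 0 ≤ Complex.arg z then Complex.arg z else Complex.arg z + 2 * Real.pi

def UnitSim {m : Type*} [Fintype m] [DecidableEq m] (A B : Matrix m m ℂ) : Prop :=
  ∃ U ∈ Matrix.unitaryGroup m ℂ, Uᴴ * A * U = B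

def UnitSimG {m l : Type*} [Fintype m] [DecidableEq m] [Fintype l] [DecidableEq l]
    (A : Matrix m m ℂ) (B : Matrix l l ℂ) : Prop :=
  ∃ e : m ≃ l, UnitSim (Matrix.reindex e e A) B

def superMat (n : ℕ) (w : ℕ → ℂ) : Matrix (Fin n) (Fin n) ℂ :=
  Matrix.of fun i j => if (j : ℕ) = (i : ℕ) + 1 then w (i : ℕ) else 0

def cycMat (n : ℕ) (w : ℕ → ℂ) : Matrix (Fin n) (Fin n) ℂ :=
  Matrix.of fun i j => if (j : ℕ) = ((i : ℕ) + 1) % n then w (i : ℕ) else 0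

/-!
A subspace on which the form `⟪x, A y⟫` vanishes meets every subspace on which `Re (e^{-iθ} A)` is
negative definite trivially, so `d(A)` is at most each `i_{≥0}`.

Conversely, if no form `Re (w ⟪x, A x⟫)` is positive definite on a subspace of `W` of dimension
more than `r`, then `W` contains an isotropic subspace of dimension at least `dim W - r`. Split off
eigenvectors of the pencil spanned by `A` and `A*`. Adding an isotropic eigenvector to the isotropic
subspace lets one induct on `dim W`. If there is none, `A` becomes diagonal by a congruence, with
nonzero values `z j` no two of which point in opposite directions. Rotate so that as many `z j` as
possible lie in the open right half-plane and write `z j = a j * (1 + t j * i)`. By maximality the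
slopes `t j` with `a j < 0` interlace, with a shift `d`, those with `a j > 0`; in each class of
indices modulo `d` they alternate, so that `a j` has the sign of the Lagrange weight
`1 / ∏ (t j - t l)` over that class. Up to positive factors absorbed by rescaling the basis, the
values of the form at two vectors of the shape `(P (t j))_j` with `deg P` small are sums
`∑ R (t j) / ∏ (t j - t l)`, which vanish because the degree of `R` is too small.
-/

section Forms

variable {E : Type*} [NormedAddCommGroup E] [InnerProductSpace ℂ E]

/-- Positive definiteness on the subspace `S` of the Hermitian form `x ↦ Re ⟪x, T x⟫`; `T` itself
need not be self-adjoint. -/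
def IsPosDefOn (T : E →ₗ[ℂ] E) (S : Submodule ℂ E) : Prop :=
  ∀ x ∈ S, x ≠ 0 → 0 < (inner ℂ x (T x)).re

/-- The sesquilinear form `⟪x, A y⟫` vanishes on the subspace `V`, i.e. the compression of `A` to
`V` is zero. -/
def IsIsotropic (A : E →ₗ[ℂ] E) (V : Submodule ℂ E) : Prop :=
  ∀ x ∈ V, ∀ y ∈ V, inner ℂ x (A y) = 0

/-- An eigenvector, in projective form, of the pencil spanned by the compressions to `W` of `A` and
its adjoint: both send `v` to multiples `γ • u` and `δ • u`, not both formally zero, of one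
vector `u`. -/
def IsPencilVector (A : E →ₗ[ℂ] E) (W : Submodule ℂ E) (v : E) : Prop :=
  v ∈ W ∧ v ≠ 0 ∧ ∃ (u : E) (γ δ : ℂ), (γ ≠ 0 ∨ δ ≠ 0) ∧
    ∀ y ∈ W, inner ℂ y (A v) = γ * inner ℂ y u ∧ inner ℂ (A y) v = δ * inner ℂ y u

/-- No form `x ↦ Re (w * ⟪x, A x⟫)` is positive definite on a subspace of `W` of dimension larger
than `r`. -/
def PosIndexLE (A : E →ₗ[ℂ] E) (W : Submodule ℂ E) (r : ℕ) : Prop :=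
  ∀ (w : ℂ) (S : Submodule ℂ E), S ≤ W → IsPosDefOn (w • A) S → Module.finrank ℂ S ≤ r

theorem inner_smul_self_apply (T : E →ₗ[ℂ] E) (c : ℂ) (x : E) :
    inner ℂ (c • x) (T (c • x)) = (‖c‖ ^ 2 : ℝ) * inner ℂ x (T x) := by
  rw [map_smul, inner_smul_left, inner_smul_right, ← mul_assoc, Complex.conj_mul',
    Complex.ofReal_pow]

theorem isPosDefOn_iff_forall_norm_eq_one {T : E →ₗ[ℂ] E} {S : Submodule ℂ E} :
    IsPosDefOn T S ↔ ∀ x ∈ (S : Set E) ∩ Metric.sphere 0 1, 0 < (inner ℂ x (T x)).re := by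
  refine ⟨fun h x hx ↦ h x hx.1 (norm_ne_zero_iff.1 (by simp [mem_sphere_zero_iff_norm.1 hx.2])),
    fun h x hx hx0 ↦ ?_⟩
  have hnorm : ‖x‖ ≠ 0 := norm_ne_zero_iff.2 hx0
  have hunit := h ((‖x‖⁻¹ : ℂ) • x) ⟨S.smul_mem _ hx, by simp [norm_smul, hnorm]⟩
  rw [inner_smul_self_apply, Complex.re_ofReal_mul] at hunit
  exact pos_of_mul_pos_right hunit (by positivity)

theorem IsPosDefOn.sup_span_singleton {T : E →ₗ[ℂ] E} (hT : T.IsSymmetric) {S : Submodule ℂ E}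
    (hS : IsPosDefOn T S) {x : E} (hx : 0 < (inner ℂ x (T x)).re)
    (hxS : ∀ s ∈ S, inner ℂ s (T x) = 0) : IsPosDefOn T (S ⊔ Submodule.span ℂ {x}) := by
  intro y hy hy0
  obtain ⟨s, hs, x', hx', rfl⟩ := Submodule.mem_sup.1 hy
  obtain ⟨c, rfl⟩ := Submodule.mem_span_singleton.1 hx'
  have hxs : inner ℂ x (T s) = 0 := by rw [← hT, ← inner_conj_symm, hxS s hs, map_zero]
  have hsum : inner ℂ (s + c • x) (T (s + c • x)) =
      inner ℂ s (T s) + (‖c‖ ^ 2 : ℝ) * inner ℂ x (T x) := by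
    rw [← inner_smul_self_apply]
    simp [hxS s hs, hxs]
  rw [hsum, Complex.add_re, Complex.re_ofReal_mul]
  rcases eq_or_ne s 0 with rfl | hs0
  · have hc : c ≠ 0 := by rintro rfl; simp at hy0
    have : 0 < ‖c‖ := norm_pos_iff.2 hc
    simp only [inner_zero_left, Complex.zero_re, zero_add]
    positivity
  · have := hS s hs hs0
    positivity

theorem IsIsotropic.sup_span_singleton {A : E →ₗ[ℂ] E} {V : Submodule ℂ E} (hV : IsIsotropic A V)
    {v : E} (hv : inner ℂ v (A v) = 0) (hVv : ∀ y ∈ V, inner ℂ y (A v) = 0)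
    (hvV : ∀ y ∈ V, inner ℂ (A y) v = 0) : IsIsotropic A (V ⊔ Submodule.span ℂ {v}) := by
  intro x hx y hy
  obtain ⟨x₁, hx₁, x₂, hx₂, rfl⟩ := Submodule.mem_sup.1 hx
  obtain ⟨c, rfl⟩ := Submodule.mem_span_singleton.1 hx₂
  obtain ⟨y₁, hy₁, y₂, hy₂, rfl⟩ := Submodule.mem_sup.1 hy
  obtain ⟨d, rfl⟩ := Submodule.mem_span_singleton.1 hy₂
  have hvy : inner ℂ v (A y₁) = 0 := by rw [← inner_conj_symm, hvV y₁ hy₁, map_zero]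
  simp [hV x₁ hx₁ y₁ hy₁, hVv x₁ hx₁, hvy, hv]

theorem finrank_le_finrank_inf_orthogonal_singleton_add_one (W : Submodule ℂ E)
    [FiniteDimensional ℂ W] (u : E) :
    Module.finrank ℂ W ≤ Module.finrank ℂ ↥(W ⊓ (Submodule.span ℂ {u})ᗮ) + 1 := by
  let φ : W →ₗ[ℂ] ℂ := innerₛₗ ℂ u ∘ₗ W.subtype
  have hker : (φ.ker).map W.subtype = W ⊓ (Submodule.span ℂ {u})ᗮ := by
    ext y
    simp [φ, Submodule.mem_orthogonal_singleton_iff_inner_right, and_comm]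
  have hrange := φ.finrank_range_add_finrank_ker
  have hle : Module.finrank ℂ φ.range ≤ 1 := by simpa using φ.range.finrank_le
  rw [← hker, (Submodule.equivMapOfInjective W.subtype W.injective_subtype φ.ker).symm.finrank_eq]
  lia

theorem PosIndexLE.mono {A : E →ₗ[ℂ] E} {W W' : Submodule ℂ E} {r : ℕ} (hr : PosIndexLE A W r)
    (hW : W' ≤ W) : PosIndexLE A W' r :=
  fun w S hS ↦ hr w S (hS.trans hW)

theorem isPosDefOn_bot (T : E →ₗ[ℂ] E) : IsPosDefOn T ⊥ :=
  fun _ hx hx0 ↦ absurd ((Submodule.mem_bot ℂ).1 hx) hx0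

variable [FiniteDimensional ℂ E]

theorem isOpen_setOf_isPosDefOn_smul (A : E →ₗ[ℂ] E) (S : Submodule ℂ E) :
    IsOpen {w : ℂ | IsPosDefOn (w • A) S} := by
  have : ProperSpace E := FiniteDimensional.proper ℂ E
  have hcompact : IsCompact ((S : Set E) ∩ Metric.sphere 0 1) :=
    (isCompact_sphere 0 1).inter_left S.closed_of_finiteDimensional
  have hcont : Continuous fun p : ℂ × E ↦ (inner ℂ p.2 ((p.1 • A) p.2)).re := by
    have : Continuous A := A.continuous_of_finiteDimensional
    simp only [LinearMap.smul_apply]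
    fun_prop
  refine isOpen_iff_eventually.2 fun w hw ↦ ?_
  simp only [Set.mem_ofPred_eq, isPosDefOn_iff_forall_norm_eq_one] at hw ⊢
  exact hcompact.eventually_forall_of_forall_eventually fun x hx ↦
    continuousAt_const.eventually_lt hcont.continuousAt (hw x hx)

theorem isSymmetric_add_adjoint (T : E →ₗ[ℂ] E) : (T + T.adjoint).IsSymmetric := by
  intro x y
  simp [inner_add_left, inner_add_right, LinearMap.adjoint_inner_left,
    LinearMap.adjoint_inner_right, add_comm]

theorem re_inner_add_adjoint_apply (T : E →ₗ[ℂ] E) (x : E) :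
    (inner ℂ x ((T + T.adjoint) x)).re = 2 * (inner ℂ x (T x)).re := by
  rw [LinearMap.add_apply, inner_add_right, LinearMap.adjoint_inner_right, Complex.add_re,
    ← inner_conj_symm (T x) x, Complex.conj_re, two_mul]

theorem isPosDefOn_add_adjoint_iff {T : E →ₗ[ℂ] E} {S : Submodule ℂ E} :
    IsPosDefOn (T + T.adjoint) S ↔ IsPosDefOn T S := by
  simp only [IsPosDefOn, re_inner_add_adjoint_apply, Nat.ofNat_pos, mul_pos_iff_of_pos_left]

/-- The compression of `A` to the subspace `W`, as an endomorphism of `W`. -/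
noncomputable def compression (A : E →ₗ[ℂ] E) (W : Submodule ℂ E) : W →ₗ[ℂ] W :=
  W.orthogonalProjectionOnto.toLinearMap ∘ₗ A ∘ₗ W.subtype

theorem inner_compression (A : E →ₗ[ℂ] E) (W : Submodule ℂ E) (x y : W) :
    inner ℂ x (compression A W y) = inner ℂ (x : E) (A y) :=
  Submodule.inner_orthogonalProjectionOnto_eq_of_mem_left x (A y)

theorem IsPosDefOn.exists_inner_apply_eq {T : E →ₗ[ℂ] E} {S : Submodule ℂ E} (hS : IsPosDefOn T S)
    (y : E) : ∃ s₀ ∈ S, ∀ s ∈ S, inner ℂ s (T s₀) = inner ℂ s y := by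
  have hinj : Function.Injective (compression T S) := by
    refine (injective_iff_map_eq_zero _).2 fun s hs ↦ ?_
    by_contra hs0
    have hpos := hS s s.2 (by simpa using hs0)
    rw [← inner_compression, hs, inner_zero_right] at hpos
    exact lt_irrefl _ hpos
  obtain ⟨s₀, hs₀⟩ := LinearMap.injective_iff_surjective.1 hinj (S.orthogonalProjectionOnto y)
  refine ⟨s₀, s₀.2, fun s hs ↦ ?_⟩
  rw [← inner_compression T S ⟨s, hs⟩ s₀, hs₀]
  exact Submodule.inner_orthogonalProjectionOnto_eq_of_mem_left ⟨s, hs⟩ y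

theorem IsPosDefOn.exists_finrank_eq_add_one {T : E →ₗ[ℂ] E} (hT : T.IsSymmetric)
    {S W : Submodule ℂ E} (hSW : S ≤ W) (hS : IsPosDefOn T S) {v y₀ : E} (hvW : v ∈ W)
    (hy₀W : y₀ ∈ W) (hv : inner ℂ v (T v) = 0) (hvS : ∀ s ∈ S, inner ℂ s (T v) = 0)
    (hy₀v : inner ℂ y₀ (T v) ≠ 0) :
    ∃ S' ≤ W, IsPosDefOn T S' ∧ Module.finrank ℂ S' = Module.finrank ℂ S + 1 := by
  obtain ⟨s₀, hs₀, hproj⟩ := hS.exists_inner_apply_eq (T y₀)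
  set y := y₀ - s₀
  set h := inner ℂ y₀ (T v)
  have hyS : ∀ s ∈ S, inner ℂ s (T y) = 0 := fun s hs ↦ by
    rw [map_sub, inner_sub_right, hproj s hs, sub_self]
  have hyv : inner ℂ y (T v) = h := by rw [inner_sub_left, hvS s₀ hs₀, sub_zero]
  -- `v` is `T`-isotropic, so adding a multiple of it shifts the value at `y` to `1`.
  set t : ℂ := ((1 - (inner ℂ y (T y)).re) / 2 : ℝ) / h
  set x := y + t • v
  have hxS : ∀ s ∈ S, inner ℂ s (T x) = 0 := fun s hs ↦ by
    rw [map_add, map_smul, inner_add_right, inner_smul_right, hyS s hs, hvS s hs, mul_zero,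
      add_zero]
  have hx : (inner ℂ x (T x)).re = 1 := by
    have hcross : t * h = ((1 - (inner ℂ y (T y)).re) / 2 : ℝ) := div_mul_cancel₀ _ hy₀v
    have hvy : inner ℂ v (T y) = starRingEnd ℂ h := by rw [← hT, ← inner_conj_symm, hyv]
    have hval : inner ℂ x (T x) = inner ℂ y (T y) + t * h + starRingEnd ℂ (t * h) := by
      simp only [x, map_add, map_smul, inner_add_left, inner_add_right, inner_smul_left,
        inner_smul_right, hv, hvy, hyv, map_mul]
      ring
    rw [hval, hcross, Complex.conj_ofReal, Complex.add_re, Complex.add_re, Complex.ofReal_re]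
    ring
  have hxS' : x ∉ S := fun hmem ↦ by simp [hxS x hmem] at hx
  refine ⟨S ⊔ Submodule.span ℂ {x}, ?_, hS.sup_span_singleton hT (hx ▸ one_pos) hxS,
    Submodule.finrank_sup_span_singleton hxS'⟩
  refine sup_le hSW ((Submodule.span_singleton_le_iff_mem _ _).2 ?_)
  exact W.add_mem (W.sub_mem hy₀W (hSW hs₀)) (W.smul_mem _ hvW)

theorem exists_smul_eq_smul_eq {K V : Type*} [Field K] [IsAlgClosed K] [AddCommGroup V]
    [Module K V] [FiniteDimensional K V] [Nontrivial V] (f g : V →ₗ[K] V) :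
    ∃ (v u : V) (γ δ : K), v ≠ 0 ∧ (γ ≠ 0 ∨ δ ≠ 0) ∧ f v = γ • u ∧ g v = δ • u := by
  by_cases hinj : Function.Injective f
  · let e := LinearEquiv.ofInjectiveEndo f hinj
    obtain ⟨μ, hμ⟩ := Module.End.exists_eigenvalue (e.symm.toLinearMap ∘ₗ g : Module.End K V)
    obtain ⟨v, hv⟩ := hμ.exists_hasEigenvector
    have hgv : g v = μ • f v := by simpa [e] using congrArg e hv.apply_eq_smul
    exact ⟨v, f v, 1, μ, hv.2, .inl one_ne_zero, (one_smul K _).symm, hgv⟩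
  · rw [injective_iff_map_eq_zero] at hinj
    push Not at hinj
    obtain ⟨v, hfv, hv⟩ := hinj
    exact ⟨v, g v, 0, 1, hv, .inr one_ne_zero, by rw [hfv, zero_smul], (one_smul K _).symm⟩

theorem exists_isPencilVector (A : E →ₗ[ℂ] E) {W : Submodule ℂ E} (hW : W ≠ ⊥) :
    ∃ v, IsPencilVector A W v := by
  have : Nontrivial W := Submodule.nontrivial_iff_ne_bot.2 hW
  obtain ⟨v, u, γ, δ, hv, hγδ, hγ, hδ⟩ :=
    exists_smul_eq_smul_eq (compression A W) (compression A.adjoint W)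
  refine ⟨v, v.2, by simpa using hv, u, γ, δ, hγδ, fun y hy ↦ ⟨?_, ?_⟩⟩
  · rw [← inner_compression A W ⟨y, hy⟩ v, hγ, inner_smul_right, Submodule.coe_inner]
  · rw [← LinearMap.adjoint_inner_right, ← inner_compression A.adjoint W ⟨y, hy⟩ v, hδ,
      inner_smul_right, Submodule.coe_inner]

theorem dense_setOf_mul_add_conj_mul_ne_zero {γ δ : ℂ} (h : γ ≠ 0 ∨ δ ≠ 0) :
    Dense {w : ℂ | w * γ + starRingEnd ℂ w * δ ≠ 0} := by
  let φ : ℂ →ₗ[ℝ] ℂ :=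
    LinearMap.mulRight ℝ γ + LinearMap.mulRight ℝ δ ∘ₗ Complex.conjAe.toLinearMap
  have hφ : ∀ w, φ w = w * γ + starRingEnd ℂ w * δ := fun w ↦ by simp [φ]
  have hker : {w : ℂ | w * γ + starRingEnd ℂ w * δ ≠ 0} = (φ.ker : Set ℂ)ᶜ := by
    ext w; simp [hφ]
  rw [hker, ← interior_eq_empty_iff_dense_compl]
  by_contra hne
  have htop := Submodule.eq_top_of_nonempty_interior' _ (Set.nonempty_iff_ne_empty.2 hne)
  have h1 : γ + δ = 0 := by simpa [hφ] using LinearMap.congr_fun (LinearMap.ker_eq_top.1 htop) 1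
  have hI : Complex.I * γ - Complex.I * δ = 0 := by
    simpa [hφ, ← sub_eq_add_neg] using LinearMap.congr_fun (LinearMap.ker_eq_top.1 htop) Complex.I
  have hsub : γ - δ = 0 := by
    simpa [← mul_sub] using hI
  have hγ : γ = 0 := by linear_combination (h1 + hsub) / 2
  have hδ : δ = 0 := by linear_combination (h1 - hsub) / 2
  exact h.elim (· hγ) (· hδ)

theorem PosIndexLE.finrank_add_one_le {A : E →ₗ[ℂ] E} {W : Submodule ℂ E} {r : ℕ}
    (hr : PosIndexLE A W r) {v u y₀ : E} {γ δ : ℂ} (hvW : v ∈ W) (hγδ : γ ≠ 0 ∨ δ ≠ 0)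
    (hu : ∀ y ∈ W, inner ℂ y (A v) = γ * inner ℂ y u ∧ inner ℂ (A y) v = δ * inner ℂ y u)
    (hv : inner ℂ v (A v) = 0) (hy₀W : y₀ ∈ W) (hy₀ : inner ℂ y₀ u ≠ 0) {w : ℂ}
    {S : Submodule ℂ E} (hSW : S ≤ W) (hSu : ∀ s ∈ S, inner ℂ s u = 0)
    (hS : IsPosDefOn (w • A) S) : Module.finrank ℂ S + 1 ≤ r := by
  obtain ⟨w', hw', hS'⟩ := (dense_setOf_mul_add_conj_mul_ne_zero hγδ).exists_mem_open
    (isOpen_setOf_isPosDefOn_smul A S) ⟨w, hS⟩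
  have hform : ∀ y ∈ W, inner ℂ y ((w' • A + (w' • A).adjoint) v) =
      (w' * γ + starRingEnd ℂ w' * δ) * inner ℂ y u := fun y hy ↦ by
    rw [LinearMap.add_apply, inner_add_right, LinearMap.adjoint_inner_right, LinearMap.smul_apply,
      LinearMap.smul_apply, inner_smul_right, inner_smul_left, (hu y hy).1, (hu y hy).2]
    ring
  have hvu : (w' * γ + starRingEnd ℂ w' * δ) * inner ℂ v u = 0 := by
    have hv' : inner ℂ (A v) v = 0 := by rw [← inner_conj_symm, hv, map_zero]
    rw [add_mul, mul_assoc, mul_assoc, ← (hu v hvW).1, ← (hu v hvW).2, hv, hv', mul_zero, mul_zero,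
      add_zero]
  obtain ⟨S', hS'W, hpos, hfinrank⟩ := (isPosDefOn_add_adjoint_iff.2 hS').exists_finrank_eq_add_one
    (isSymmetric_add_adjoint _) hSW hvW hy₀W ((hform v hvW).trans hvu)
    (fun s hs ↦ by rw [hform s (hSW hs), hSu s hs, mul_zero])
    (by rw [hform y₀ hy₀W]; exact mul_ne_zero hw' hy₀)
  exact hfinrank ▸ hr w' S' hS'W (isPosDefOn_add_adjoint_iff.1 hpos)

theorem PosIndexLE.exists_le_notMem {A : E →ₗ[ℂ] E} {W : Submodule ℂ E} {r : ℕ}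
    (hr : PosIndexLE A W r) {v : E} (hv : IsPencilVector A W v) (hvA : inner ℂ v (A v) = 0) :
    ∃ W' ≤ W, v ∉ W' ∧ (∀ y ∈ W', inner ℂ y (A v) = 0 ∧ inner ℂ (A y) v = 0) ∧
      ∃ r', PosIndexLE A W' r' ∧
        Module.finrank ℂ W + r' ≤ Module.finrank ℂ W' + 1 + r := by
  obtain ⟨hvW, hv0, u, γ, δ, hγδ, hu⟩ := hv
  have hmem_u : ∀ {y}, y ∈ (Submodule.span ℂ {u})ᗮ ↔ inner ℂ y u = 0 :=
    Submodule.mem_orthogonal_singleton_iff_inner_left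
  set W₁ := W ⊓ (Submodule.span ℂ {u})ᗮ
  refine ⟨W₁ ⊓ (Submodule.span ℂ {v})ᗮ, inf_le_left.trans inf_le_left, fun hmem ↦ hv0 ?_,
    fun y hy ↦ ?_, ?_⟩
  · exact inner_self_eq_zero.1 (Submodule.mem_orthogonal_singleton_iff_inner_left.1 hmem.2)
  · rw [(hu y hy.1.1).1, (hu y hy.1.1).2, hmem_u.1 hy.1.2, mul_zero, mul_zero]
    exact ⟨rfl, rfl⟩
  have hfinrank : Module.finrank ℂ W ≤ Module.finrank ℂ W₁ + 1 :=
    finrank_le_finrank_inf_orthogonal_singleton_add_one W u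
  have hfinrank₁ := finrank_le_finrank_inf_orthogonal_singleton_add_one W₁ v
  by_cases huW : ∀ y ∈ W, inner ℂ y u = 0
  · have hW₁ : W₁ = W := inf_eq_left.2 fun y hy ↦ hmem_u.2 (huW y hy)
    rw [hW₁] at hfinrank₁ ⊢
    exact ⟨r, hr.mono inf_le_left, by lia⟩
  · push Not at huW
    obtain ⟨y₀, hy₀W, hy₀⟩ := huW
    have hdrop : ∀ (w : ℂ) (S : Submodule ℂ E), S ≤ W₁ → IsPosDefOn (w • A) S →
        Module.finrank ℂ S + 1 ≤ r := fun w S hSW hS ↦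
      hr.finrank_add_one_le hvW hγδ hu hvA hy₀W hy₀ (hSW.trans inf_le_left)
        (fun s hs ↦ hmem_u.1 (hSW hs).2) hS
    have hr1 : 1 ≤ r := le_of_add_le_right (hdrop 0 ⊥ bot_le (isPosDefOn_bot _))
    exact ⟨r - 1, fun w S hSW hS ↦ Nat.le_sub_one_of_lt (hdrop w S (hSW.trans inf_le_left) hS),
      by lia⟩

theorem IsPencilVector.exists_splitting {A : E →ₗ[ℂ] E} {W : Submodule ℂ E} {v : E}
    (hv : IsPencilVector A W v) (hvA : inner ℂ v (A v) ≠ 0) :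
    ∃ W₁ ≤ W, Module.finrank ℂ W₁ + 1 = Module.finrank ℂ W ∧
      (∀ y ∈ W₁, inner ℂ y (A v) = 0 ∧ inner ℂ v (A y) = 0) ∧
      ∀ v', IsPencilVector A W₁ v' → IsPencilVector A W v' := by
  obtain ⟨hvW, -, u, γ, δ, -, hu⟩ := hv
  have hmem_u : ∀ {y}, y ∈ (Submodule.span ℂ {u})ᗮ ↔ inner ℂ y u = 0 :=
    Submodule.mem_orthogonal_singleton_iff_inner_left
  have hvu : inner ℂ v u ≠ 0 := fun h ↦ hvA (by rw [(hu v hvW).1, h, mul_zero])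
  set W₁ := W ⊓ (Submodule.span ℂ {u})ᗮ
  have hlt : W₁ < W := inf_le_left.lt_of_ne fun h ↦ hvu (hmem_u.1 (h.ge hvW).2)
  have hle : Module.finrank ℂ W ≤ Module.finrank ℂ W₁ + 1 :=
    finrank_le_finrank_inf_orthogonal_singleton_add_one W u
  have hortho : ∀ y ∈ W₁, inner ℂ y (A v) = 0 ∧ inner ℂ v (A y) = 0 := fun y hy ↦ by
    rw [← inner_conj_symm v, (hu y hy.1).1, (hu y hy.1).2, hmem_u.1 hy.2]
    simp
  refine ⟨W₁, inf_le_left, le_antisymm (Submodule.finrank_lt_finrank_of_lt hlt) hle, hortho, ?_⟩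
  rintro v' ⟨hv'W, hv'0, u', γ', δ', hγδ', hu'⟩
  refine ⟨hv'W.1, hv'0, u' - (inner ℂ v u' / inner ℂ v u) • u, γ', δ', hγδ', fun y hy ↦ ?_⟩
  -- Test against the component of `y` in `W₁` along `v`; the two forms do not see the rest.
  have hproj : y - starRingEnd ℂ (inner ℂ y u / inner ℂ v u) • v ∈ W₁ := by
    refine ⟨W.sub_mem hy (W.smul_mem _ hvW), hmem_u.2 ?_⟩
    rw [inner_sub_left, inner_smul_left, Complex.conj_conj, div_mul_cancel₀ _ hvu, sub_self]
  have hAvv' : inner ℂ (A v) v' = 0 := by rw [← inner_conj_symm, (hortho v' hv'W).1, map_zero]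
  have h := hu' _ hproj
  simp only [map_sub, map_smul, inner_sub_left, inner_smul_left, (hortho v' hv'W).2, hAvv',
    mul_zero, sub_zero, Complex.conj_conj] at h
  rw [h.1, h.2, inner_sub_right, inner_smul_right]
  constructor <;> ring

theorem exists_pairwise_inner_apply_eq_zero (A : E →ₗ[ℂ] E) {W : Submodule ℂ E}
    (hW : ∀ v, IsPencilVector A W v → inner ℂ v (A v) ≠ 0) :
    ∃ b : Fin (Module.finrank ℂ W) → E, (∀ i, b i ∈ W) ∧ (∀ i, inner ℂ (b i) (A (b i)) ≠ 0) ∧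
      Pairwise fun i j ↦ inner ℂ (b i) (A (b j)) = 0 := by
  induction hm : Module.finrank ℂ W generalizing W with
  | zero => exact ⟨Fin.elim0, fun i ↦ i.elim0, fun i ↦ i.elim0, fun i ↦ i.elim0⟩
  | succ m ih =>
    obtain ⟨v, hv⟩ := exists_isPencilVector A (W := W) (by rintro rfl; simp at hm)
    obtain ⟨W₁, hW₁, hfinrank, hortho, hlift⟩ := hv.exists_splitting (hW v hv)
    obtain ⟨b, hbW, hb, hbb⟩ := ih (fun v' hv' ↦ hW v' (hlift v' hv')) (by lia)
    refine ⟨Fin.cons v b, Fin.cases hv.1 fun i ↦ hW₁ (hbW i), Fin.cases (hW v hv) hb, ?_⟩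
    intro i j hij
    cases i using Fin.cases with
    | zero =>
      cases j using Fin.cases with
      | zero => exact absurd rfl hij
      | succ j => exact (hortho _ (hbW j)).2
    | succ i =>
      cases j using Fin.cases with
      | zero => exact (hortho _ (hbW i)).1
      | succ j => exact hbb fun h ↦ hij (congrArg Fin.succ h)

end Forms

section OrthogonalFamily

variable {E : Type*} [NormedAddCommGroup E] [InnerProductSpace ℂ E] {ι : Type*}
  {A : E →ₗ[ℂ] E} {b : ι → E}

theorem inner_sum_smul_apply_sum_smul [Fintype ι]
    (hb : Pairwise fun i j ↦ inner ℂ (b i) (A (b j)) = 0) (c d : ι → ℂ) :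
    inner ℂ (∑ i, c i • b i) (A (∑ i, d i • b i)) =
      ∑ i, starRingEnd ℂ (c i) * d i * inner ℂ (b i) (A (b i)) := by
  simp only [map_sum, map_smul, sum_inner, inner_sum, inner_smul_left, inner_smul_right]
  refine Finset.sum_congr rfl fun i _ ↦ ?_
  rw [Finset.sum_eq_single i (fun j _ hji ↦ by rw [hb hji, mul_zero]) (by simp)]
  ring

theorem linearIndependent_of_pairwise_inner_apply_eq_zero
    (hb : Pairwise fun i j ↦ inner ℂ (b i) (A (b j)) = 0) (hz : ∀ i, inner ℂ (b i) (A (b i)) ≠ 0) :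
    LinearIndependent ℂ b := by
  refine linearIndependent_iff'.2 fun s g hg i hi ↦ ?_
  have h := congrArg (fun x ↦ inner ℂ (b i) (A x)) hg
  simp only [map_sum, map_smul, inner_sum, inner_smul_right, map_zero, inner_zero_right] at h
  rw [Finset.sum_eq_single i (fun j _ hji ↦ by rw [hb hji.symm, mul_zero])
    fun hi' ↦ absurd hi hi'] at h
  exact (mul_eq_zero.1 h).resolve_right (hz i)

theorem inner_apply_left_of_mem_span {c : ℂ} {v : E}
    (h : ∀ i, inner ℂ (A (b i)) v = c * inner ℂ (b i) (A v)) {z : E}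
    (hz : z ∈ Submodule.span ℂ (Set.range b)) : inner ℂ (A z) v = c * inner ℂ z (A v) := by
  induction hz using Submodule.span_induction with
  | mem z hz => obtain ⟨i, rfl⟩ := hz; exact h i
  | zero => simp
  | add z z' _ _ hz hz' => rw [map_add, inner_add_left, inner_add_left, hz, hz', mul_add]
  | smul c z _ hz => rw [map_smul, inner_smul_left, inner_smul_left, hz, mul_left_comm]

theorem exists_isPencilVector_inner_apply_eq_zero
    (hb : Pairwise fun i j ↦ inner ℂ (b i) (A (b j)) = 0) {i j : ι} {ω : ℂ} {x y : ℝ}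
    (hω : ω ≠ 0) (hi : inner ℂ (b i) (A (b i)) = ω * x) (hj : inner ℂ (b j) (A (b j)) = ω * y)
    (hx : x < 0) (hy : 0 < y) :
    ∃ v, IsPencilVector A (Submodule.span ℂ (Set.range b)) v ∧ inner ℂ v (A v) = 0 := by
  have hij : i ≠ j := by
    rintro rfl
    have : x = y := by exact_mod_cast mul_left_cancel₀ hω (hi.symm.trans hj)
    linarith
  set v := (√y : ℂ) • b i + (√(-x) : ℂ) • b j
  have hbi : inner ℂ (b i) (A v) = √y * (ω * x) := by
    simp only [v, map_add, map_smul, inner_add_right, inner_smul_right, hi, hb hij]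
    ring
  have hbj : inner ℂ (b j) (A v) = √(-x) * (ω * y) := by
    simp only [v, map_add, map_smul, inner_add_right, inner_smul_right, hj, hb hij.symm]
    ring
  have hv : ∀ z, inner ℂ v z = √y * inner ℂ (b i) z + √(-x) * inner ℂ (b j) z := fun z ↦ by
    simp [v]
  refine ⟨v, ⟨?_, fun hv0 ↦ ?_, A v, 1, starRingEnd ℂ ω / ω, .inl one_ne_zero, fun z hz ↦
    ⟨(one_mul _).symm, ?_⟩⟩, ?_⟩
  · exact add_mem (Submodule.smul_mem _ _ (Submodule.subset_span ⟨i, rfl⟩))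
      (Submodule.smul_mem _ _ (Submodule.subset_span ⟨j, rfl⟩))
  · have : √y * (ω * x) ≠ 0 := by
      simp [hω, hx.ne, (Real.sqrt_pos.2 hy).ne']
    exact this (by rw [← hbi, hv0, map_zero, inner_zero_right])
  · have hcoeff : ∀ {l m : ι} {t : ℝ}, inner ℂ (b m) (A (b m)) = ω * t →
        inner ℂ (A (b l)) (b m) = starRingEnd ℂ ω / ω * inner ℂ (b l) (A (b m)) := by
      intro l m t hm
      rw [← inner_conj_symm]
      rcases eq_or_ne l m with rfl | hlm
      · rw [hm, map_mul, Complex.conj_ofReal]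
        field_simp
      · rw [hb hlm, hb hlm.symm, map_zero, mul_zero]
    refine inner_apply_left_of_mem_span (fun l ↦ ?_) hz
    simp only [v, map_add, map_smul, inner_add_right, inner_smul_right, hcoeff hi, hcoeff hj]
    ring
  · have hsy : (√y : ℂ) * √y = y := by exact_mod_cast Real.mul_self_sqrt hy.le
    have hsx : (√(-x) : ℂ) * √(-x) = -x := by
      exact_mod_cast Real.mul_self_sqrt (neg_nonneg.2 hx.le)
    rw [hv (A v), hbi, hbj]
    linear_combination ω * x * hsy + ω * y * hsx

theorem sum_eval_div_prod_sub_eq_zero {F : Type*} [Field F] [DecidableEq ι] {s : Finset ι}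
    {t : ι → F} (ht : Set.InjOn t s) {P : F[X]} (hP : P.degree < (s.card - 1 : ℕ)) :
    ∑ j ∈ s, P.eval (t j) / ∏ l ∈ s.erase j, (t j - t l) = 0 := by
  rw [← Lagrange.coeff_eq_sum ht (hP.trans_le (by exact_mod_cast Nat.sub_le _ _)),
    coeff_eq_zero_of_degree_lt hP]

theorem sum_conj_eval_mul_eval_div_prod_sub_eq_zero [DecidableEq ι] {s : Finset ι} {t : ι → ℝ}
    (ht : Set.InjOn t s) {k : ℕ} (hk : 2 * k < s.card) {P Q : ℂ[X]} (hP : P ∈ degreeLT ℂ k)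
    (hQ : Q ∈ degreeLT ℂ k) :
    ∑ j ∈ s, starRingEnd ℂ (P.eval (t j : ℂ)) * Q.eval (t j : ℂ) * (1 + t j * Complex.I) /
      ∏ l ∈ s.erase j, (t j - t l : ℂ) = 0 := by
  set R : ℂ[X] := P.map (starRingEnd ℂ) * Q * (1 + X * C Complex.I)
  have hR : R.degree < (s.card - 1 : ℕ) := by
    rcases eq_or_ne P 0 with rfl | hP0
    · simp [R]
    rcases eq_or_ne Q 0 with rfl | hQ0
    · simp [R]
    have hPk := (natDegree_lt_iff_degree_lt hP0).2 (mem_degreeLT.1 hP)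
    have hQk := (natDegree_lt_iff_degree_lt hQ0).2 (mem_degreeLT.1 hQ)
    have hlin : (1 + X * C Complex.I : ℂ[X]).natDegree ≤ 1 := by compute_degree
    have hmul : R.natDegree ≤ P.natDegree + Q.natDegree + 1 :=
      natDegree_mul_le.trans (add_le_add (natDegree_mul_le.trans
        (add_le_add_left natDegree_map_le _)) hlin)
    exact degree_le_natDegree.trans_lt (by exact_mod_cast (by lia : R.natDegree < s.card - 1))
  have heval : ∀ j, R.eval (t j : ℂ) =
      starRingEnd ℂ (P.eval (t j : ℂ)) * Q.eval (t j : ℂ) * (1 + t j * Complex.I) := fun j ↦ by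
    have hconj := eval_map_apply (p := P) (starRingEnd ℂ) (t j : ℂ)
    rw [Complex.conj_ofReal] at hconj
    simp only [R, eval_mul, eval_add, eval_one, eval_X, eval_C, hconj]
  simpa only [heval, Function.comp_apply] using
    sum_eval_div_prod_sub_eq_zero (Complex.ofReal_injective.comp_injOn ht) hR

/-- The vectors `∑ j, g j * P (col j) (t j) • b j`, where `P` assigns to every colour `c` a
polynomial of degree less than `K c`, as a linear function of `P`. -/
noncomputable def evalCombination [Fintype ι] {κ : Type*} (b : ι → E) (col : ι → κ) (g t : ι → ℂ)
    (K : κ → ℕ) : (∀ c, degreeLT ℂ (K c)) →ₗ[ℂ] E :=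
  Fintype.linearCombination ℂ b ∘ₗ LinearMap.pi fun j ↦
    g j • (leval (t j) ∘ₗ (degreeLT ℂ (K (col j))).subtype ∘ₗ LinearMap.proj (col j))

theorem evalCombination_apply [Fintype ι] {κ : Type*} (b : ι → E) (col : ι → κ) (g t : ι → ℂ)
    (K : κ → ℕ) (P : ∀ c, degreeLT ℂ (K c)) :
    evalCombination b col g t K P = ∑ j, (g j * (P (col j) : ℂ[X]).eval (t j)) • b j := by
  simp [evalCombination, Fintype.linearCombination_apply]

theorem finrank_pi_degreeLT {F κ : Type*} [Field F] [Fintype κ] (K : κ → ℕ) :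
    Module.finrank F (∀ c, degreeLT F (K c)) = ∑ c, K c := by
  rw [(LinearEquiv.piCongrRight fun c ↦ degreeLTEquiv F (K c)).finrank_eq,
    Module.finrank_pi_fintype]
  simp

theorem evalCombination_injective [Fintype ι] {κ : Type*} [DecidableEq κ]
    (hb : LinearIndependent ℂ b) {col : ι → κ} {g t : ι → ℂ} (hg : ∀ j, g j ≠ 0) {K : κ → ℕ}
    (ht : ∀ c, Set.InjOn t (Finset.univ.filter (col · = c)))
    (hK : ∀ c, K c ≤ (Finset.univ.filter (col · = c)).card) :
    Function.Injective (evalCombination b col g t K) := by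
  refine (injective_iff_map_eq_zero _).2 fun P hP ↦ funext fun c ↦ Subtype.ext ?_
  rw [evalCombination_apply] at hP
  have hroot := Fintype.linearIndependent_iff.1 hb _ hP
  refine eq_zero_of_degree_lt_of_eval_index_eq_zero _ (ht c)
    ((mem_degreeLT.1 (P c).2).trans_le (by exact_mod_cast hK c)) fun j hj ↦ ?_
  obtain rfl : col j = c := (Finset.mem_filter.1 hj).2
  exact (mul_eq_zero.1 (hroot j)).resolve_left (hg j)

theorem isIsotropic_range_evalCombination [Fintype ι] [DecidableEq ι] {κ : Type*} [DecidableEq κ]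
    (hb : Pairwise fun i j ↦ inner ℂ (b i) (A (b j)) = 0) {ω : ℂ} {g a t : ι → ℝ}
    (hz : ∀ j, inner ℂ (b j) (A (b j)) = ω * (a j * (1 + t j * Complex.I))) {col : ι → κ}
    (hg : ∀ j, g j ^ 2 * a j = (∏ l ∈ (Finset.univ.filter (col · = col j)).erase j, (t j - t l))⁻¹)
    {K : κ → ℕ} (ht : ∀ c, Set.InjOn t (Finset.univ.filter (col · = c)))
    (hK : ∀ c, 2 * K c < (Finset.univ.filter (col · = c)).card) :
    IsIsotropic A (evalCombination b col (g ·) (t ·) K).range := by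
  rintro _ ⟨P, rfl⟩ _ ⟨Q, rfl⟩
  rw [evalCombination_apply, evalCombination_apply, inner_sum_smul_apply_sum_smul hb,
    ← Finset.sum_fiberwise_of_maps_to fun j _ ↦ Finset.mem_image_of_mem col (Finset.mem_univ j)]
  refine Finset.sum_eq_zero fun c _ ↦ ?_
  have hsum := sum_conj_eval_mul_eval_div_prod_sub_eq_zero (ht c) (hK c) (P c).2 (Q c).2
  rw [← mul_zero ω, ← hsum, Finset.mul_sum]
  refine Finset.sum_congr rfl fun j hj ↦ ?_
  obtain rfl : col j = c := (Finset.mem_filter.1 hj).2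
  have hgj : (g j ^ 2 * a j : ℂ) =
      (∏ l ∈ (Finset.univ.filter (col · = col j)).erase j, (t j - t l : ℂ))⁻¹ := by
    exact_mod_cast hg j
  rw [hz, map_mul, Complex.conj_ofReal, div_eq_mul_inv, ← hgj]
  ring

theorem exists_isIsotropic_of_mul_prod_sub_pos [Fintype ι] [DecidableEq ι] {κ : Type*} [Fintype κ]
    [DecidableEq κ] (hb : Pairwise fun i j ↦ inner ℂ (b i) (A (b j)) = 0) {ω : ℂ} (hω : ω ≠ 0)
    {a t : ι → ℝ} (hz : ∀ j, inner ℂ (b j) (A (b j)) = ω * (a j * (1 + t j * Complex.I)))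
    {col : ι → κ}
    (hpos : ∀ j, 0 < a j * ∏ l ∈ (Finset.univ.filter (col · = col j)).erase j, (t j - t l))
    {K : κ → ℕ} (hK : ∀ c, 2 * K c < (Finset.univ.filter (col · = c)).card) :
    ∃ V ≤ Submodule.span ℂ (Set.range b), IsIsotropic A V ∧ Module.finrank ℂ V = ∑ c, K c := by
  have ht : ∀ c, Set.InjOn t (Finset.univ.filter (col · = c)) := by
    intro c i hi j hj hij
    have hi := (Finset.mem_filter.1 hi).2
    have hj := (Finset.mem_filter.1 hj).2
    by_contra hne
    refine Finset.prod_ne_zero_iff.1 (right_ne_zero_of_mul (hpos i).ne') j ?_ (sub_eq_zero.2 hij)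
    simp [Ne.symm hne, hi, hj]
  have ha : ∀ j, a j ≠ 0 := fun j ↦ left_ne_zero_of_mul (hpos j).ne'
  have hzne : ∀ j, inner ℂ (b j) (A (b j)) ≠ 0 := fun j ↦ by
    have : (1 + t j * Complex.I : ℂ) ≠ 0 := fun h ↦ by simpa using congrArg Complex.re h
    rw [hz]
    exact mul_ne_zero hω (mul_ne_zero (by exact_mod_cast ha j) this)
  set g : ι → ℝ := fun j ↦
    √(a j * ∏ l ∈ (Finset.univ.filter (col · = col j)).erase j, (t j - t l))⁻¹
  have hg : ∀ j, g j ≠ 0 := fun j ↦ (Real.sqrt_pos.2 (inv_pos.2 (hpos j))).ne'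
  have hg2 : ∀ j, g j ^ 2 * a j =
      (∏ l ∈ (Finset.univ.filter (col · = col j)).erase j, (t j - t l))⁻¹ := fun j ↦ by
    rw [Real.sq_sqrt (inv_pos.2 (hpos j)).le, mul_inv, mul_right_comm, inv_mul_cancel₀ (ha j),
      one_mul]
  refine ⟨(evalCombination b col (g ·) (t ·) K).range, ?_,
    isIsotropic_range_evalCombination hb hz hg2 ht hK, ?_⟩
  · rintro _ ⟨P, rfl⟩
    rw [evalCombination_apply]
    exact Submodule.sum_smul_mem _ _ fun j _ ↦ Submodule.subset_span ⟨j, rfl⟩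
  · rw [LinearMap.finrank_range_of_inj, finrank_pi_degreeLT]
    refine evalCombination_injective (linearIndependent_of_pairwise_inner_apply_eq_zero hb hzne)
      (fun j ↦ by exact_mod_cast hg j) (fun c ↦ Complex.ofReal_injective.comp_injOn (ht c))
      fun c ↦ ?_
    have := hK c
    lia

end OrthogonalFamily

section Interlacing

theorem neg_one_pow_card_mul_prod_sub_pos {ι : Type*} [DecidableEq ι] {s : Finset ι} {t : ι → ℝ}
    {i : ι} (h : ∀ l ∈ s.erase i, t l ≠ t i) :
    0 < (-1) ^ (s.filter (t i < t ·)).card * ∏ l ∈ s.erase i, (t i - t l) := by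
  have hs : s.filter (t i < t ·) = (s.erase i).filter (t i < t ·) := by
    rw [Finset.filter_erase, Finset.erase_eq_of_notMem fun h ↦ (Finset.mem_filter.1 h).2.false]
  rw [hs, ← Finset.prod_filter_mul_prod_filter_not (s.erase i) (t i < t ·), ← mul_assoc,
    ← Finset.prod_const, ← Finset.prod_mul_distrib]
  refine mul_pos (Finset.prod_pos fun l hl ↦ ?_) (Finset.prod_pos fun l hl ↦ ?_)
  · linarith [(Finset.mem_filter.1 hl).2]
  · have hl := Finset.mem_filter.1 hl
    exact sub_pos.2 ((not_lt.1 hl.2).lt_of_ne (h l hl.1))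

variable {k d : ℕ} {p : Fin k → ℝ} {q : Fin (k + d) → ℝ}

theorem apply_castAdd_le_of_card_add_card_le (hp : Monotone p) (hq : Monotone q)
    (h : ∀ x, (Finset.univ.filter (p · < x)).card + (Finset.univ.filter (x < q ·)).card ≤ k + d)
    (i : Fin k) : q (i.castAdd d) ≤ p i := by
  by_contra! hlt
  obtain ⟨x, hpx, hxq⟩ := exists_between hlt
  have hp' : Finset.Iic i ⊆ Finset.univ.filter (p · < x) := fun j hj ↦ by
    simpa using (hp (Finset.mem_Iic.1 hj)).trans_lt hpx
  have hq' : Finset.Ici (i.castAdd d) ⊆ Finset.univ.filter (x < q ·) := fun j hj ↦ by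
    simpa using hxq.trans_le (hq (Finset.mem_Ici.1 hj))
  have := (add_le_add (Finset.card_le_card hp') (Finset.card_le_card hq')).trans (h x)
  rw [Fin.card_Iic, Fin.card_Ici, Fin.val_castAdd] at this
  lia

theorem apply_le_addNat_of_card_add_card_le (hp : Monotone p) (hq : Monotone q)
    (h : ∀ x, (Finset.univ.filter (x < p ·)).card + (Finset.univ.filter (q · < x)).card ≤ k + d)
    (i : Fin k) : p i ≤ q (i.addNat d) := by
  by_contra! hlt
  obtain ⟨x, hqx, hxp⟩ := exists_between hlt
  have hp' : Finset.Ici i ⊆ Finset.univ.filter (x < p ·) := fun j hj ↦ by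
    simpa using hxp.trans_le (hp (Finset.mem_Ici.1 hj))
  have hq' : Finset.Iic (i.addNat d) ⊆ Finset.univ.filter (q · < x) := fun j hj ↦ by
    simpa using (hq (Finset.mem_Iic.1 hj)).trans_lt hqx
  have := (add_le_add (Finset.card_le_card hp') (Finset.card_le_card hq')).trans (h x)
  rw [Fin.card_Ici, Fin.card_Iic, Fin.val_addNat] at this
  lia

/-- Two increasing sequences interlace with shift `d`: `q i < p i < q (i + d)` for all `i`. -/
structure IsInterlacing (p : Fin k → ℝ) (q : Fin (k + d) → ℝ) : Prop where
  monotone_left : Monotone p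
  monotone_right : Monotone q
  right_lt_left (i : Fin k) : q (i.castAdd d) < p i
  left_lt_right (i : Fin k) : p i < q (i.addNat d)

/-- The colouring of the members of two sequences by their index modulo `d`. If the sequences
interlace with shift `d`, the members of each colour alternate, beginning and ending in the longer
sequence. -/
def indexMod (k d : ℕ) [NeZero d] : Fin k ⊕ Fin (k + d) → Fin d :=
  Sum.elim (Fin.ofNat d ·) (Fin.ofNat d ·)

variable [NeZero d]

theorem add_le_of_lt_of_ofNat_eq {i j : ℕ} (h : i < j) (hij : Fin.ofNat d i = Fin.ofNat d j) :
    i + d ≤ j := by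
  have hmod : i ≡ j [MOD d] := congrArg Fin.val hij
  have := Nat.le_of_dvd (Nat.sub_pos_of_lt h) ((Nat.modEq_iff_dvd' h.le).1 hmod)
  lia

theorem card_filter_ofNat_eq_and_lt (m : ℕ) :
    (Finset.univ.filter fun j : Fin (k + d) ↦ Fin.ofNat d j = Fin.ofNat d m ∧ m < j).card =
      (Finset.univ.filter fun i : Fin k ↦ Fin.ofNat d i = Fin.ofNat d m ∧ m ≤ i).card := by
  have hadd (i : ℕ) : Fin.ofNat d (i + d) = Fin.ofNat d i := Fin.ext (by simp)
  refine (Finset.card_bij (fun i _ ↦ i.addNat d) ?_ ?_ ?_).symm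
  · intro i hi
    have := NeZero.pos d
    simp only [Finset.mem_filter_univ, Fin.val_addNat, hadd] at hi ⊢
    exact ⟨hi.1, by lia⟩
  · simp
  · intro j hj
    simp only [Finset.mem_filter_univ] at hj
    have hle := add_le_of_lt_of_ofNat_eq hj.2 hj.1.symm
    refine ⟨⟨j - d, by lia⟩, ?_, Fin.ext (Nat.sub_add_cancel (by lia))⟩
    simp only [Finset.mem_filter_univ]
    exact ⟨by rw [← hadd, Nat.sub_add_cancel (by lia), hj.1], by lia⟩

theorem card_filter_ofNat_eq_and_le {n : ℕ} (j : Fin n) :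
    (Finset.univ.filter fun i : Fin n ↦ Fin.ofNat d i = Fin.ofNat d j ∧ (j : ℕ) ≤ i).card =
      (Finset.univ.filter fun i : Fin n ↦ Fin.ofNat d i = Fin.ofNat d j ∧ (j : ℕ) < i).card +
        1 := by
  rw [← Finset.card_insert_of_notMem (a := j) (by simp)]
  congr 1
  ext i
  rw [Finset.mem_insert, Finset.mem_filter_univ, Finset.mem_filter_univ]
  refine ⟨fun hi ↦ hi.2.eq_or_lt.imp (fun h ↦ Fin.ext h.symm) fun h ↦ ⟨hi.1, h⟩, ?_⟩
  rintro (rfl | hi)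
  · exact ⟨rfl, le_rfl⟩
  · exact ⟨hi.1, hi.2.le⟩

theorem card_filter_univ_sum {α β : Type*} [Fintype α] [Fintype β] (P : α ⊕ β → Prop)
    [DecidablePred P] : (Finset.univ.filter P).card =
      (Finset.univ.filter fun x ↦ P (Sum.inl x)).card +
        (Finset.univ.filter fun x ↦ P (Sum.inr x)).card := by
  simp only [Finset.card_filter, Fintype.sum_sum_type]

theorem card_filter_indexMod_eq (c : Fin d) :
    (Finset.univ.filter (indexMod k d · = c)).card =
      2 * (Finset.univ.filter fun i ↦ indexMod k d (Sum.inl i) = c).card + 1 := by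
  have hclass (m : ℕ) : Fin.ofNat d m = c ↔ Fin.ofNat d m = Fin.ofNat d c ∧ (c : ℕ) ≤ m := by
    rw [Fin.ofNat_val_eq_self, iff_self_and]
    rintro rfl
    exact Nat.mod_le m d
  have hl : (Finset.univ.filter fun i : Fin k ↦ indexMod k d (Sum.inl i) = c) =
      Finset.univ.filter fun i : Fin k ↦ Fin.ofNat d i = Fin.ofNat d c ∧ (c : ℕ) ≤ i :=
    Finset.filter_congr fun i _ ↦ hclass i
  have hr : (Finset.univ.filter fun j : Fin (k + d) ↦ indexMod k d (Sum.inr j) = c) =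
      Finset.univ.filter fun j : Fin (k + d) ↦ Fin.ofNat d j = Fin.ofNat d c ∧ (c : ℕ) ≤ j :=
    Finset.filter_congr fun j _ ↦ hclass j
  have hcard := card_filter_ofNat_eq_and_le (d := d) (c.castLE (Nat.le_add_left d k))
  rw [Fin.val_castLE, card_filter_ofNat_eq_and_lt] at hcard
  rw [card_filter_univ_sum, hl, hr, hcard]
  ring

namespace IsInterlacing

theorem left_lt_right_iff (h : IsInterlacing p q) {i : Fin k} {j : Fin (k + d)}
    (hij : Fin.ofNat d i = Fin.ofNat d j) :
    p i < q j ↔ (i : ℕ) < j := by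
  refine ⟨fun hlt ↦ ?_, fun hlt ↦
    (h.left_lt_right i).trans_le (h.monotone_right (add_le_of_lt_of_ofNat_eq hlt hij))⟩
  by_contra! hji
  exact hlt.not_gt ((h.monotone_right (show j ≤ i.castAdd d from hji)).trans_lt (h.right_lt_left i))

theorem right_lt_left_iff (h : IsInterlacing p q) {i : Fin k} {j : Fin (k + d)}
    (hij : Fin.ofNat d i = Fin.ofNat d j) :
    q j < p i ↔ (j : ℕ) ≤ i := by
  refine ⟨fun hlt ↦ ?_, fun hji ↦
    (h.monotone_right (show j ≤ i.castAdd d from hji)).trans_lt (h.right_lt_left i)⟩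
  by_contra! hlt'
  exact hlt.not_gt ((h.left_lt_right_iff hij).2 hlt')

theorem left_lt_left_iff (h : IsInterlacing p q) {i j : Fin k}
    (hij : Fin.ofNat d i = Fin.ofNat d j) :
    p i < p j ↔ (i : ℕ) < j :=
  ⟨fun hlt ↦ h.monotone_left.reflect_lt hlt, fun hlt ↦
    ((h.left_lt_right_iff (j := j.castAdd d) hij).2 hlt).trans (h.right_lt_left j)⟩

theorem right_lt_right_iff (h : IsInterlacing p q) {i j : Fin (k + d)}
    (hij : Fin.ofNat d i = Fin.ofNat d j) :
    q i < q j ↔ (i : ℕ) < j := by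
  refine ⟨fun hlt ↦ h.monotone_right.reflect_lt hlt, fun hlt ↦ ?_⟩
  have hle := add_le_of_lt_of_ofNat_eq hlt hij
  exact (h.right_lt_left ⟨i, by lia⟩).trans ((h.left_lt_right_iff (i := ⟨i, by lia⟩) hij).2 hlt)

theorem card_filter_left_lt (h : IsInterlacing p q) (i : Fin k) :
    (Finset.univ.filter fun l ↦
      indexMod k d l = indexMod k d (.inl i) ∧
        Sum.elim p q (.inl i) < Sum.elim p q l).card =
      2 * (Finset.univ.filter fun j : Fin k ↦
        Fin.ofNat d j = Fin.ofNat d i ∧ (i : ℕ) < j).card + 1 := by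
  have hl : (Finset.univ.filter fun j ↦ indexMod k d (.inl j) = indexMod k d (.inl i) ∧
      Sum.elim p q (.inl i) < Sum.elim p q (.inl j)) = Finset.univ.filter fun j : Fin k ↦
        Fin.ofNat d j = Fin.ofNat d i ∧ (i : ℕ) < j :=
    Finset.filter_congr fun j _ ↦ and_congr_right fun hj ↦ h.left_lt_left_iff hj.symm
  have hr : (Finset.univ.filter fun j ↦ indexMod k d (.inr j) = indexMod k d (.inl i) ∧
      Sum.elim p q (.inl i) < Sum.elim p q (.inr j)) = Finset.univ.filter fun j : Fin (k + d) ↦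
        Fin.ofNat d j = Fin.ofNat d i ∧ (i : ℕ) < j :=
    Finset.filter_congr fun j _ ↦ and_congr_right fun hj ↦ h.left_lt_right_iff hj.symm
  rw [card_filter_univ_sum, hl, hr, card_filter_ofNat_eq_and_lt, card_filter_ofNat_eq_and_le]
  ring

theorem card_filter_right_lt (h : IsInterlacing p q) (j : Fin (k + d)) :
    (Finset.univ.filter fun l ↦
      indexMod k d l = indexMod k d (.inr j) ∧
        Sum.elim p q (.inr j) < Sum.elim p q l).card =
      2 * (Finset.univ.filter fun i : Fin k ↦
        Fin.ofNat d i = Fin.ofNat d j ∧ (j : ℕ) ≤ i).card := by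
  have hl : (Finset.univ.filter fun i ↦ indexMod k d (.inl i) = indexMod k d (.inr j) ∧
      Sum.elim p q (.inr j) < Sum.elim p q (.inl i)) = Finset.univ.filter fun i : Fin k ↦
        Fin.ofNat d i = Fin.ofNat d j ∧ (j : ℕ) ≤ i :=
    Finset.filter_congr fun i _ ↦ and_congr_right fun hi ↦ h.right_lt_left_iff hi
  have hr : (Finset.univ.filter fun i ↦ indexMod k d (.inr i) = indexMod k d (.inr j) ∧
      Sum.elim p q (.inr j) < Sum.elim p q (.inr i)) = Finset.univ.filter fun i : Fin (k + d) ↦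
        Fin.ofNat d i = Fin.ofNat d j ∧ (j : ℕ) < i :=
    Finset.filter_congr fun i _ ↦ and_congr_right fun hi ↦ h.right_lt_right_iff hi.symm
  rw [card_filter_univ_sum, hl, hr, card_filter_ofNat_eq_and_lt]
  ring

theorem prod_left_sub_neg (h : IsInterlacing p q) (i : Fin k) :
    ∏ l ∈ (Finset.univ.filter (indexMod k d · = indexMod k d (.inl i))).erase (.inl i),
      (Sum.elim p q (.inl i) - Sum.elim p q l) < 0 := by
  have hne : ∀ l ∈ (Finset.univ.filter (indexMod k d · = indexMod k d (.inl i))).erase (.inl i),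
      Sum.elim p q l ≠ Sum.elim p q (.inl i) := by
    rintro (j | j) hj <;> simp only [Finset.mem_erase, Finset.mem_filter_univ] at hj
    · have hji : (j : ℕ) ≠ i := fun hji ↦ hj.1 (by rw [Fin.ext hji])
      exact hji.lt_or_gt.elim (fun hlt ↦ ((h.left_lt_left_iff hj.2).2 hlt).ne)
        fun hlt ↦ ((h.left_lt_left_iff hj.2.symm).2 hlt).ne'
    · exact (lt_or_ge (i : ℕ) j).elim (fun hlt ↦ ((h.left_lt_right_iff hj.2.symm).2 hlt).ne')
        fun hle ↦ ((h.right_lt_left_iff hj.2.symm).2 hle).ne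
  have hsign := neg_one_pow_card_mul_prod_sub_pos hne
  rw [Finset.filter_filter, h.card_filter_left_lt, pow_succ, pow_mul] at hsign
  simpa using hsign

theorem prod_right_sub_pos (h : IsInterlacing p q) (j : Fin (k + d)) :
    0 < ∏ l ∈ (Finset.univ.filter (indexMod k d · = indexMod k d (.inr j))).erase (.inr j),
      (Sum.elim p q (.inr j) - Sum.elim p q l) := by
  have hne : ∀ l ∈ (Finset.univ.filter (indexMod k d · = indexMod k d (.inr j))).erase (.inr j),
      Sum.elim p q l ≠ Sum.elim p q (.inr j) := by
    rintro (i | i) hi <;> simp only [Finset.mem_erase, Finset.mem_filter_univ] at hi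
    · exact (lt_or_ge (i : ℕ) j).elim (fun hlt ↦ ((h.left_lt_right_iff hi.2).2 hlt).ne)
        fun hle ↦ ((h.right_lt_left_iff hi.2).2 hle).ne'
    · have hij : (i : ℕ) ≠ j := fun hij ↦ hi.1 (by rw [Fin.ext hij])
      exact hij.lt_or_gt.elim (fun hlt ↦ ((h.right_lt_right_iff hi.2).2 hlt).ne)
        fun hlt ↦ ((h.right_lt_right_iff hi.2.symm).2 hlt).ne'
  have hsign := neg_one_pow_card_mul_prod_sub_pos hne
  rw [Finset.filter_filter, h.card_filter_right_lt, pow_mul] at hsign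
  simpa using hsign

end IsInterlacing

end Interlacing

section Directions

theorem exists_equiv_monotone {α : Type*} [Finite α] (f : α → ℝ) :
    ∃ (n : ℕ) (e : Fin n ≃ α), Monotone (f ∘ e) := by
  let e := (Finite.equivFin α).symm
  exact ⟨_, (Tuple.sort (f ∘ e)).trans e, Tuple.monotone_sort (f ∘ e)⟩

theorem exists_equiv_sum_monotone {ι : Type*} [Finite ι] (P : ι → Prop) (f : ι → ℝ) :
    ∃ (k l : ℕ) (e : Fin k ⊕ Fin l ≃ ι), (∀ i, P (e (.inl i))) ∧ (∀ j, ¬ P (e (.inr j))) ∧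
      Monotone (fun i ↦ f (e (.inl i))) ∧ Monotone fun j ↦ f (e (.inr j)) := by
  classical
  obtain ⟨k, e₁, h₁⟩ := exists_equiv_monotone fun i : {i // P i} ↦ f i
  obtain ⟨l, e₂, h₂⟩ := exists_equiv_monotone fun i : {i // ¬ P i} ↦ f i
  exact ⟨k, l, (e₁.sumCongr e₂).trans (Equiv.sumCompl P), fun i ↦ (e₁ i).2, fun j ↦ (e₂ j).2,
    h₁, h₂⟩

theorem exists_forall_card_filter_re_pos_le {ι : Type*} [Fintype ι] {z : ι → ℂ}
    (hz : ∀ i, z i ≠ 0) : ∃ w₀ : ℂ, w₀ ≠ 0 ∧ (∀ i, (w₀ * z i).re ≠ 0) ∧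
      ∀ w : ℂ, (Finset.univ.filter fun i ↦ 0 < (w * z i).re).card ≤
        (Finset.univ.filter fun i ↦ 0 < (w₀ * z i).re).card := by
  set N : ℂ → ℕ := fun w ↦ (Finset.univ.filter fun i ↦ 0 < (w * z i).re).card
  have hbdd : BddAbove (Set.range N) := ⟨Fintype.card ι, by
    rintro _ ⟨w, rfl⟩
    exact Finset.card_le_univ _⟩
  obtain ⟨w₁, hw₁⟩ := Nat.sSup_mem (Set.range_nonempty N) hbdd
  have hdense : Dense (⋂ i, {w : ℂ | (w * z i).re ≠ 0}) := by
    refine dense_iInter_of_isOpen (fun i ↦ isOpen_ne_fun (by fun_prop) continuous_const) fun i ↦ ?_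
    convert dense_setOf_mul_add_conj_mul_ne_zero (δ := starRingEnd ℂ (z i)) (.inl (hz i)) using 4
    rw [← map_mul, Complex.add_conj, Complex.ofReal_eq_zero]
    simp
  have hopen : IsOpen (⋂ i ∈ Finset.univ.filter fun i ↦ 0 < (w₁ * z i).re,
      {w : ℂ | 0 < (w * z i).re}) :=
    isOpen_biInter_finset fun i _ ↦ isOpen_lt continuous_const (by fun_prop)
  obtain ⟨w₀, hw₀, hgen, h₀⟩ :=
    (hdense.sdiff_singleton 0).inter_open_nonempty _ hopen ⟨w₁, by simp⟩
  refine ⟨w₀, h₀, Set.mem_iInter.1 hgen, fun w ↦ ?_⟩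
  calc N w ≤ N w₁ := hw₁ ▸ le_csSup hbdd ⟨w, rfl⟩
    _ ≤ N w₀ := Finset.card_le_card fun i hi ↦ by simpa using Set.mem_iInter₂.1 hw₀ i hi

variable {k d : ℕ} {a : Fin k ⊕ Fin (k + d) → ℝ} {p : Fin k → ℝ} {q : Fin (k + d) → ℝ}

theorem isInterlacing_of_forall_card_le (hp : Monotone p) (hq : Monotone q)
    (hpq : ∀ i j, p i ≠ q j) (ha : ∀ i, a (.inl i) < 0) (ha' : ∀ j, 0 < a (.inr j))
    (h : ∀ w : ℂ, (Finset.univ.filter fun j ↦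
      0 < (w * (a j * (1 + Sum.elim p q j * Complex.I))).re).card ≤ k + d) :
    IsInterlacing p q := by
  have hre (x : ℝ) (j) : (-(x + Complex.I) * (a j * (1 + Sum.elim p q j * Complex.I))).re =
      a j * (Sum.elim p q j - x) := by
    simp
    ring
  have hre' (x : ℝ) (j) : ((x + Complex.I) * (a j * (1 + Sum.elim p q j * Complex.I))).re =
      a j * (x - Sum.elim p q j) := by
    simp
    ring
  have hmul {x y : ℝ} (hx : x < 0) : 0 < x * y ↔ y < 0 := by
    rw [← neg_mul_neg, mul_pos_iff_of_pos_left (neg_pos.2 hx), neg_pos]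
  refine ⟨hp, hq, fun i ↦ (apply_castAdd_le_of_card_add_card_le hp hq (fun x ↦ ?_) i).lt_of_ne
    (hpq _ _).symm, fun i ↦ (apply_le_addNat_of_card_add_card_le hp hq (fun x ↦ ?_) i).lt_of_ne
    (hpq _ _)⟩
  · simpa only [hre, card_filter_univ_sum, mul_pos_iff_of_pos_left (ha' _),
      hmul (ha _), Sum.elim_inl, Sum.elim_inr, sub_pos, sub_neg]
      using h (-(x + Complex.I))
  · simpa only [hre', card_filter_univ_sum, mul_pos_iff_of_pos_left (ha' _),
      hmul (ha _), Sum.elim_inl, Sum.elim_inr, sub_pos, sub_neg]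
      using h (x + Complex.I)

theorem exists_isInterlacing {ι : Type*} [Finite ι] {z : ι → ℂ} (hz : ∀ i, z i ≠ 0)
    (hopp : ∀ i j, ∀ c : ℝ, c < 0 → z i ≠ z j * c) :
    ∃ (ω : ℂ) (k d : ℕ) (e : Fin k ⊕ Fin (k + d) ≃ ι) (a : Fin k ⊕ Fin (k + d) → ℝ)
      (p : Fin k → ℝ) (q : Fin (k + d) → ℝ), ω ≠ 0 ∧ IsInterlacing p q ∧
      (∀ j, z (e j) = ω * (a j * (1 + Sum.elim p q j * Complex.I))) ∧
      (∀ i, a (.inl i) < 0) ∧ ∀ j, 0 < a (.inr j) := by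
  have := Fintype.ofFinite ι
  obtain ⟨w, hw₀, hw, hmax⟩ := exists_forall_card_filter_re_pos_le hz
  let a i := (w * z i).re
  let t i := (w * z i).im / a i
  have hat (i) : w * z i = a i * (1 + t i * Complex.I) := by
    have hmul : a i * t i = (w * z i).im := mul_div_cancel₀ _ (hw i)
    rw [mul_add, mul_one, ← mul_assoc, ← Complex.ofReal_mul, hmul, Complex.re_add_im]
  obtain ⟨k, l, e, hneg, hpos, hp, hq⟩ := exists_equiv_sum_monotone (a · < 0) t
  replace hpos (j) : 0 < a (e (.inr j)) := (not_lt.1 (hpos j)).lt_of_ne (hw _).symm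
  have hcomp : (fun j ↦ t (e j)) = Sum.elim (fun i ↦ t (e (.inl i))) fun j ↦ t (e (.inr j)) :=
    (Sum.elim_comp_inl_inr _).symm
  have hcard (P : ι → Prop) [DecidablePred P] :
      (Finset.univ.filter fun j ↦ P (e j)).card = (Finset.univ.filter P).card := by
    simp only [Finset.card_filter, e.sum_comp fun i ↦ if P i then 1 else 0]
  have hle (u : ℂ) : (Finset.univ.filter fun j ↦ 0 < (u * (w * z (e j))).re).card ≤ l := by
    calc _ = (Finset.univ.filter fun i ↦ 0 < (u * w * z i).re).card := by
          simp only [hcard fun i ↦ 0 < (u * (w * z i)).re, mul_assoc]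
      _ ≤ (Finset.univ.filter fun j ↦ 0 < a (e j)).card := (hmax _).trans_eq (hcard _).symm
      _ = l := by simp [card_filter_univ_sum, hpos, (hneg _).not_gt]
  obtain ⟨d, rfl⟩ : ∃ d, l = k + d := by
    refine Nat.exists_eq_add_of_le (le_trans ?_ (hle (-1)))
    simp [card_filter_univ_sum, hneg, -Complex.mul_re, a]
  refine ⟨w⁻¹, k, d, e, a ∘ e, _, _, inv_ne_zero hw₀, isInterlacing_of_forall_card_le (a := a ∘ e)
    hp hq (fun i j hij ↦ ?_) hneg hpos fun u ↦ ?_, fun j ↦ ?_, hneg, hpos⟩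
  · refine hopp (e (.inl i)) (e (.inr j)) _ (div_neg_of_neg_of_pos (hneg i) (hpos j))
      (mul_left_cancel₀ hw₀ ?_)
    have := Complex.ofReal_ne_zero.2 (hpos j).ne'
    rw [← mul_assoc, hat, hat, hij]
    push_cast
    field_simp
  · simpa only [← hcomp, hat, Function.comp_apply] using hle u
  · rw [← hcomp, eq_inv_mul_iff_mul_eq₀ hw₀, hat, Function.comp_apply]

end Directions

section Isotropic

variable {E : Type*} [NormedAddCommGroup E] [InnerProductSpace ℂ E] {A : E →ₗ[ℂ] E}

theorem re_inner_sum_smul_apply_sum_smul {ι : Type*} [Fintype ι] {b : ι → E}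
    (hb : Pairwise fun i j ↦ inner ℂ (b i) (A (b j)) = 0) (c : ι → ℂ) :
    (inner ℂ (∑ i, c i • b i) (A (∑ i, c i • b i))).re =
      ∑ i, ‖c i‖ ^ 2 * (inner ℂ (b i) (A (b i))).re := by
  simp only [inner_sum_smul_apply_sum_smul hb, Complex.conj_mul', ← Complex.ofReal_pow,
    Complex.re_sum, Complex.re_ofReal_mul]

theorem re_inner_apply_self_nonneg_of_mem_span_range {ι : Type*} [Finite ι] {b : ι → E}
    (hb : Pairwise fun i j ↦ inner ℂ (b i) (A (b j)) = 0)
    (hnonneg : ∀ i, 0 ≤ (inner ℂ (b i) (A (b i))).re) {x : E}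
    (hx : x ∈ Submodule.span ℂ (Set.range b)) : 0 ≤ (inner ℂ x (A x)).re := by
  have := Fintype.ofFinite ι
  obtain ⟨c, rfl⟩ := (Submodule.mem_span_range_iff_exists_fun ℂ).1 hx
  rw [re_inner_sum_smul_apply_sum_smul hb]
  exact Finset.sum_nonneg fun i _ ↦ mul_nonneg (sq_nonneg _) (hnonneg i)

theorem isPosDefOn_span_range {ι : Type*} [Finite ι] {b : ι → E}
    (hb : Pairwise fun i j ↦ inner ℂ (b i) (A (b j)) = 0)
    (hpos : ∀ i, 0 < (inner ℂ (b i) (A (b i))).re) :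
    IsPosDefOn A (Submodule.span ℂ (Set.range b)) := by
  have := Fintype.ofFinite ι
  intro x hx hx0
  obtain ⟨c, rfl⟩ := (Submodule.mem_span_range_iff_exists_fun ℂ).1 hx
  obtain ⟨i, hi⟩ : ∃ i, c i ≠ 0 := by
    by_contra! h
    simp [h] at hx0
  rw [re_inner_sum_smul_apply_sum_smul hb]
  exact Finset.sum_pos' (fun j _ ↦ mul_nonneg (sq_nonneg _) (hpos j).le)
    ⟨i, Finset.mem_univ i, mul_pos (pow_pos (norm_pos_iff.2 hi) 2) (hpos i)⟩

theorem IsInterlacing.exists_isIsotropic {k d : ℕ} {p : Fin k → ℝ} {q : Fin (k + d) → ℝ}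
    (h : IsInterlacing p q) {b : Fin k ⊕ Fin (k + d) → E}
    (hb : Pairwise fun i j ↦ inner ℂ (b i) (A (b j)) = 0) {ω : ℂ} (hω : ω ≠ 0)
    {a : Fin k ⊕ Fin (k + d) → ℝ}
    (hz : ∀ j, inner ℂ (b j) (A (b j)) = ω * (a j * (1 + Sum.elim p q j * Complex.I)))
    (hneg : ∀ i, a (.inl i) < 0) (hpos : ∀ j, 0 < a (.inr j)) :
    ∃ V ≤ Submodule.span ℂ (Set.range b), IsIsotropic A V ∧ Module.finrank ℂ V = k := by
  rcases eq_or_ne d 0 with rfl | hd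
  · have hk : k = 0 := by
      by_contra hk
      exact ((h.right_lt_left ⟨0, by lia⟩).trans (h.left_lt_right ⟨0, by lia⟩)).false
    exact ⟨⊥, bot_le, by simp [IsIsotropic], by rw [finrank_bot, hk]⟩
  have := NeZero.mk hd
  obtain ⟨V, hV, hVA, hfinrank⟩ := exists_isIsotropic_of_mul_prod_sub_pos hb hω hz
    (col := indexMod k d)
    (K := fun c ↦ (Finset.univ.filter fun i ↦ indexMod k d (.inl i) = c).card)
    (Sum.rec (fun i ↦ mul_pos_of_neg_of_neg (hneg i) (h.prod_left_sub_neg i))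
      fun j ↦ mul_pos (hpos j) (h.prod_right_sub_pos j))
    fun c ↦ by rw [card_filter_indexMod_eq]; lia
  refine ⟨V, hV, hVA, hfinrank.trans ?_⟩
  rw [← Finset.card_eq_sum_card_fiberwise fun i _ ↦ Finset.mem_coe.2 (Finset.mem_univ _),
    Finset.card_fin]

theorem exists_isIsotropic_of_pairwise_inner_apply_eq_zero {ι : Type*} [Fintype ι] {b : ι → E}
    (hb : Pairwise fun i j ↦ inner ℂ (b i) (A (b j)) = 0) (hz : ∀ i, inner ℂ (b i) (A (b i)) ≠ 0)
    (hv : ∀ v, IsPencilVector A (Submodule.span ℂ (Set.range b)) v → inner ℂ v (A v) ≠ 0) {r : ℕ}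
    (hr : PosIndexLE A (Submodule.span ℂ (Set.range b)) r) :
    ∃ V ≤ Submodule.span ℂ (Set.range b), IsIsotropic A V ∧
      Fintype.card ι ≤ Module.finrank ℂ V + r := by
  obtain ⟨ω, k, d, e, a, p, q, hω, hpq, hza, hneg, hpos⟩ := exists_isInterlacing hz
    fun i j c hc hij ↦ by
      obtain ⟨v, hvb, hvA⟩ := exists_isPencilVector_inner_apply_eq_zero hb (hz j) hij
        (j := j) (y := 1) (by simp) hc one_pos
      exact hv v hvb hvA
  have hbe : Pairwise fun i j ↦ inner ℂ (b (e i)) (A (b (e j))) = 0 :=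
    fun i j hij ↦ hb (e.injective.ne hij)
  obtain ⟨V, hV, hVA, hfinrank⟩ := hpq.exists_isIsotropic hbe hω hza hneg hpos
  have hle : k + d ≤ r := by
    have hspan := isPosDefOn_span_range (A := ω⁻¹ • A) (b := fun j ↦ b (e (.inr j)))
      (fun i j hij ↦ by simp [hbe (Sum.inr_injective.ne hij)])
      (fun j ↦ by simpa [hza, inner_smul_right, hω] using hpos j)
    have hdim := finrank_span_eq_card <| (linearIndependent_of_pairwise_inner_apply_eq_zero hb
      hz).comp _ (e.injective.comp Sum.inr_injective)
    rw [Fintype.card_fin] at hdim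
    exact hdim.ge.trans (hr _ _ (Submodule.span_mono (Set.range_comp_subset_range _ b)) hspan)
  refine ⟨V, hV.trans (Submodule.span_mono (Set.range_comp_subset_range e b)), hVA, ?_⟩
  rw [← Fintype.card_congr e, Fintype.card_sum, Fintype.card_fin, Fintype.card_fin, hfinrank]
  lia

theorem exists_isIsotropic_of_posIndexLE [FiniteDimensional ℂ E] {W : Submodule ℂ E} {r : ℕ}
    (hr : PosIndexLE A W r) :
    ∃ V ≤ W, IsIsotropic A V ∧ Module.finrank ℂ W ≤ Module.finrank ℂ V + r := by
  induction hm : Module.finrank ℂ W using Nat.strong_induction_on generalizing W r with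
  | _ m ih =>
    subst hm
    by_cases hW : ∃ v, IsPencilVector A W v ∧ inner ℂ v (A v) = 0
    · obtain ⟨v, hv, hvA⟩ := hW
      obtain ⟨W', hW', hvW', hortho, r', hr', hle⟩ := hr.exists_le_notMem hv hvA
      have hlt : W' < W := hW'.lt_of_ne fun h ↦ hvW' (h ▸ hv.1)
      obtain ⟨V, hV, hVA, hfinrank⟩ := ih _ (Submodule.finrank_lt_finrank_of_lt hlt) hr' rfl
      refine ⟨V ⊔ Submodule.span ℂ {v}, sup_le (hV.trans hW') ?_, hVA.sup_span_singleton hvA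
        (fun y hy ↦ (hortho y (hV hy)).1) fun y hy ↦ (hortho y (hV hy)).2, ?_⟩
      · exact (Submodule.span_singleton_le_iff_mem _ _).2 hv.1
      · rw [Submodule.finrank_sup_span_singleton fun h ↦ hvW' (hV h)]
        lia
    · push Not at hW
      obtain ⟨b, hbW, hz, hb⟩ := exists_pairwise_inner_apply_eq_zero A hW
      have hspan : Submodule.span ℂ (Set.range b) = W :=
        Submodule.eq_of_le_of_finrank_eq (Submodule.span_le.2 (Set.range_subset_iff.2 hbW)) <| by
          rw [finrank_span_eq_card (linearIndependent_of_pairwise_inner_apply_eq_zero hb hz),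
            Fintype.card_fin]
      obtain ⟨V, hV, hVA, hfinrank⟩ :=
        exists_isIsotropic_of_pairwise_inner_apply_eq_zero hb hz (by rwa [hspan])
          (by rwa [hspan])
      exact ⟨V, hspan ▸ hV, hVA, by rwa [Fintype.card_fin] at hfinrank⟩

end Isotropic

section Matrix

theorem IsIsotropic.finrank_add_finrank_le {E : Type*} [NormedAddCommGroup E]
    [InnerProductSpace ℂ E] [FiniteDimensional ℂ E] {A : E →ₗ[ℂ] E} {V S : Submodule ℂ E}
    (hV : IsIsotropic A V) (hS : IsPosDefOn (-A) S) :
    Module.finrank ℂ V + Module.finrank ℂ S ≤ Module.finrank ℂ E := by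
  refine Submodule.finrank_add_finrank_le_of_disjoint (Submodule.disjoint_def.2 fun x hxV hxS ↦ ?_)
  by_contra hx
  simpa [hV x hxV x hxV] using hS x hxS hx

theorem IsPosDefOn.exists_neg_exp_smul {E : Type*} [NormedAddCommGroup E] [InnerProductSpace ℂ E]
    {A : E →ₗ[ℂ] E} {S : Submodule ℂ E} {w : ℂ} (hS : IsPosDefOn (w • A) S) :
    ∃ θ : ℝ, IsPosDefOn (-(Complex.exp (-(θ : ℂ) * Complex.I) • A)) S := by
  refine ⟨-(-w).arg, fun x hx hx0 ↦ pos_of_mul_pos_right ?_ (norm_nonneg (-w))⟩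
  refine (hS x hx hx0).trans_eq ?_
  rw [← Complex.re_ofReal_mul, ← inner_smul_right, LinearMap.neg_apply, LinearMap.smul_apply,
    LinearMap.smul_apply, smul_neg, smul_smul, Complex.ofReal_neg, neg_neg,
    Complex.norm_mul_exp_arg_mul_I, neg_smul, neg_neg]

variable {m : Type*} [Fintype m] [DecidableEq m]

theorem isHermitian_matRe {m : Type*} (A : Matrix m m ℂ) : (matRe A).IsHermitian := by
  simp [matRe, Matrix.IsHermitian, add_comm]

theorem isPosDefOn_neg_toEuclideanLin_matRe_iff {A : Matrix m m ℂ}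
    {S : Submodule ℂ (EuclideanSpace ℂ m)} :
    IsPosDefOn (-Matrix.toEuclideanLin (matRe A)) S ↔ IsPosDefOn (-Matrix.toEuclideanLin A) S := by
  have hre (x) : (inner ℂ x (Matrix.toEuclideanLin (matRe A) x)).re =
      (inner ℂ x (Matrix.toEuclideanLin A x)).re := by
    rw [matRe, map_smul, map_add, Matrix.toEuclideanLin_conjTranspose_eq_adjoint,
      LinearMap.smul_apply, inner_smul_right, ← Complex.ofReal_ofNat, ← Complex.ofReal_inv,
      Complex.re_ofReal_mul, re_inner_add_adjoint_apply, inv_mul_cancel_left₀ two_ne_zero]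
  simp only [IsPosDefOn, LinearMap.neg_apply, inner_neg_right, Complex.neg_re, hre]

theorem inner_eigenvectorBasis_apply {M : Matrix m m ℂ} (hM : M.IsHermitian) (i j : m) :
    inner ℂ (hM.eigenvectorBasis i) (Matrix.toEuclideanLin M (hM.eigenvectorBasis j)) =
      if i = j then (hM.eigenvalues j : ℂ) else 0 := by
  have hj : Matrix.toEuclideanLin M (hM.eigenvectorBasis j) =
      (hM.eigenvalues j : ℂ) • hM.eigenvectorBasis j := by
    ext l
    simpa using congrFun (hM.mulVec_eigenvectorBasis j) l
  rw [hj, inner_smul_right, orthonormal_iff_ite.1 hM.eigenvectorBasis.orthonormal, mul_ite,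
    mul_one, mul_zero]

theorem finrank_span_range_eigenvectorBasis {M : Matrix m m ℂ} (hM : M.IsHermitian) (P : m → Prop)
    [DecidablePred P] :
    Module.finrank ℂ (Submodule.span ℂ (Set.range fun i : {i // P i} ↦ hM.eigenvectorBasis i)) =
      (Finset.univ.filter P).card := by
  have hlin := hM.eigenvectorBasis.orthonormal.linearIndependent.comp (Subtype.val : {i // P i} → m)
    Subtype.val_injective
  exact (finrank_span_eq_card hlin).trans (Fintype.card_subtype P)

theorem exists_isPosDefOn_neg_toEuclideanLin {M : Matrix m m ℂ} (hM : M.IsHermitian) :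
    ∃ S, IsPosDefOn (-Matrix.toEuclideanLin M) S ∧
      Module.finrank ℂ S + iNonneg M = Fintype.card m := by
  refine ⟨_, isPosDefOn_span_range (b := fun i : {i // ¬ 0 ≤ hM.eigenvalues i} ↦
    hM.eigenvectorBasis i) (fun i j hij ↦ ?_) fun i ↦ ?_, ?_⟩
  · simp [inner_eigenvectorBasis_apply, Subtype.coe_injective.ne hij]
  · simpa [inner_eigenvectorBasis_apply] using i.2
  · rw [finrank_span_range_eigenvectorBasis, iNonneg, dif_pos hM, add_comm,
      Finset.card_filter_add_card_filter_not, Finset.card_univ]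

theorem IsPosDefOn.finrank_add_iNonneg_le {M : Matrix m m ℂ} (hM : M.IsHermitian)
    {S : Submodule ℂ (EuclideanSpace ℂ m)} (hS : IsPosDefOn (-Matrix.toEuclideanLin M) S) :
    Module.finrank ℂ S + iNonneg M ≤ Fintype.card m := by
  rw [iNonneg, dif_pos hM, ← finrank_span_range_eigenvectorBasis hM,
    ← finrank_euclideanSpace (𝕜 := ℂ)]
  refine Submodule.finrank_add_finrank_le_of_disjoint (Submodule.disjoint_def.2 fun x hxS hx ↦ ?_)
  by_contra hx0
  have hneg := hS x hxS hx0
  have hnonneg := re_inner_apply_self_nonneg_of_mem_span_range (A := Matrix.toEuclideanLin M)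
    (b := fun i : {i // 0 ≤ hM.eigenvalues i} ↦ hM.eigenvectorBasis i)
    (fun i j hij ↦ by simp [inner_eigenvectorBasis_apply, Subtype.coe_injective.ne hij])
    (fun i ↦ by simpa [inner_eigenvectorBasis_apply] using i.2) hx
  rw [LinearMap.neg_apply, inner_neg_right, Complex.neg_re] at hneg
  linarith

theorem inner_toEuclideanLin_conjTranspose_mul_mul {l : Type*} [Fintype l] [DecidableEq l]
    (A : Matrix m m ℂ) (V : Matrix m l ℂ) (x y : EuclideanSpace ℂ l) :
    inner ℂ x (Matrix.toEuclideanLin (Vᴴ * A * V) y) = inner ℂ (Matrix.toEuclideanLin V x)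
      (Matrix.toEuclideanLin A (Matrix.toEuclideanLin V y)) := by
  rw [← LinearMap.adjoint_inner_right, ← Matrix.toEuclideanLin_conjTranspose_eq_adjoint,
    Matrix.toEuclideanLin, Matrix.toLpLin_mul (q := 2), Matrix.toLpLin_mul (q := 2)]
  rfl

theorem isIsotropic_range_toEuclideanLin {l : Type*} [Fintype l] [DecidableEq l]
    {A : Matrix m m ℂ} {V : Matrix m l ℂ} (hV : Vᴴ * A * V = 0) :
    IsIsotropic (Matrix.toEuclideanLin A) (LinearMap.range (Matrix.toEuclideanLin V)) := by
  rintro _ ⟨x, rfl⟩ _ ⟨y, rfl⟩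
  rw [← inner_toEuclideanLin_conjTranspose_mul_mul, hV, map_zero, LinearMap.zero_apply,
    inner_zero_right]

theorem finrank_range_toEuclideanLin {l m : Type*} [Fintype l] [Fintype m] [DecidableEq l]
    {V : Matrix m l ℂ} (hV : Vᴴ * V = 1) :
    Module.finrank ℂ (LinearMap.range (Matrix.toEuclideanLin V)) = Fintype.card l := by
  classical
  have hinj : Function.LeftInverse (Matrix.toEuclideanLin Vᴴ) (Matrix.toEuclideanLin V) :=
    fun x ↦ by simp [Matrix.toLpLin_apply, hV]
  rw [LinearMap.finrank_range_of_inj hinj.injective, finrank_euclideanSpace]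

theorem IsIsotropic.exists_conjTranspose_mul_mul_eq_zero {A : Matrix m m ℂ}
    {W : Submodule ℂ (EuclideanSpace ℂ m)} (hW : IsIsotropic (Matrix.toEuclideanLin A) W) :
    ∃ V : Matrix m (Fin (Module.finrank ℂ W)) ℂ, Vᴴ * V = 1 ∧ Vᴴ * A * V = 0 := by
  let b := stdOrthonormalBasis ℂ W
  let V : Matrix m (Fin (Module.finrank ℂ W)) ℂ := Matrix.of fun i j ↦ (b j : EuclideanSpace ℂ m) i
  refine ⟨V, Matrix.ext fun i j ↦ ?_, Matrix.ext fun i j ↦ ?_⟩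
  · rw [← inner_matrix_col_col, Matrix.one_apply]
    exact orthonormal_iff_ite.1 b.orthonormal i j
  · rw [Matrix.mul_assoc, ← inner_matrix_col_col]
    exact hW (b i) (b i).2 (b j) (b j).2

theorem isGreatest_zdi (A : Matrix m m ℂ) :
    IsGreatest {k | ∃ W, IsIsotropic (Matrix.toEuclideanLin A) W ∧ Module.finrank ℂ W = k}
      (zdi A) := by
  have hset : {k | ∃ W, IsIsotropic (Matrix.toEuclideanLin A) W ∧ Module.finrank ℂ W = k} =
      {k | ∃ V : Matrix m (Fin k) ℂ, Vᴴ * V = 1 ∧ Vᴴ * A * V = 0} := by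
    ext k
    constructor
    · rintro ⟨W, hW, rfl⟩
      exact hW.exists_conjTranspose_mul_mul_eq_zero
    · rintro ⟨V, hV, hVA⟩
      exact ⟨_, isIsotropic_range_toEuclideanLin hVA,
        (finrank_range_toEuclideanLin hV).trans (Fintype.card_fin k)⟩
  rw [zdi, ← hset]
  have hbdd : BddAbove {k | ∃ W, IsIsotropic (Matrix.toEuclideanLin A) W ∧
      Module.finrank ℂ W = k} := ⟨Module.finrank ℂ (EuclideanSpace ℂ m), by
    rintro _ ⟨W, -, rfl⟩
    exact W.finrank_le⟩
  exact ⟨Nat.sSup_mem ⟨0, ⊥, by simp [IsIsotropic], finrank_bot ℂ _⟩ hbdd, fun k ↦ le_csSup hbdd⟩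

theorem zdi_le_iNonneg_matRe_smul (A : Matrix m m ℂ) (c : ℂ) : zdi A ≤ iNonneg (matRe (c • A)) := by
  obtain ⟨V, hV, hfinrank⟩ := (isGreatest_zdi A).1
  obtain ⟨S, hS, hcard⟩ := exists_isPosDefOn_neg_toEuclideanLin (isHermitian_matRe (c • A))
  have hVc : IsIsotropic (Matrix.toEuclideanLin (c • A)) V := fun x hx y hy ↦ by
    rw [map_smul, LinearMap.smul_apply, inner_smul_right, hV x hx y hy, mul_zero]
  have hle := hVc.finrank_add_finrank_le (isPosDefOn_neg_toEuclideanLin_matRe_iff.1 hS)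
  rw [finrank_euclideanSpace] at hle
  lia

theorem le_zdi_of_forall_le_iNonneg {A : Matrix m m ℂ} {k : ℕ}
    (hk : ∀ θ : ℝ, k ≤ iNonneg (matRe (Complex.exp (-(θ : ℂ) * Complex.I) • A))) : k ≤ zdi A := by
  have hposIndex : PosIndexLE (Matrix.toEuclideanLin A) ⊤ (Fintype.card m - k) := by
    intro w S _ hS
    obtain ⟨θ, hθ⟩ := hS.exists_neg_exp_smul
    rw [← map_smul, ← isPosDefOn_neg_toEuclideanLin_matRe_iff] at hθ
    have := hθ.finrank_add_iNonneg_le (isHermitian_matRe _)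
    have := hk θ
    omega
  obtain ⟨V, -, hV, hfinrank⟩ := exists_isIsotropic_of_posIndexLE hposIndex
  have hle : Module.finrank ℂ V ≤ zdi A := (isGreatest_zdi A).2 ⟨V, hV, rfl⟩
  obtain ⟨S, -, hcard⟩ := exists_isPosDefOn_neg_toEuclideanLin
    (isHermitian_matRe (Complex.exp (-((0 : ℝ) : ℂ) * Complex.I) • A))
  have := hk 0
  rw [finrank_top, finrank_euclideanSpace] at hfinrank
  lia

end Matrix

theorem zdi_eq_min_iNonneg_general {m : Type*} [Fintype m] [DecidableEq m] (A : Matrix m m ℂ) :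
    ∃ θ₀ : ℝ, zdi A = iNonneg (matRe (Complex.exp (-(θ₀ : ℂ) * Complex.I) • A)) ∧
      ∀ θ : ℝ, zdi A ≤ iNonneg (matRe (Complex.exp (-(θ : ℂ) * Complex.I) • A)) := by
  let f (θ : ℝ) := iNonneg (matRe (Complex.exp (-(θ : ℂ) * Complex.I) • A))
  exact ⟨Function.argmin f, (zdi_le_iNonneg_matRe_smul A _).antisymm
    (le_zdi_of_forall_le_iNonneg fun θ ↦ Function.argmin_le f θ),
    fun θ ↦ zdi_le_iNonneg_matRe_smul A _⟩

/-- Theorem 2.2, Li–Sze. -/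
theorem zdi_eq_min_iNonneg {n : ℕ} (A : Matrix (Fin n) (Fin n) ℂ) :
    ∃ θ₀ : ℝ, zdi A = iNonneg (matRe (Complex.exp (-(θ₀ : ℂ) * Complex.I) • A)) ∧
      ∀ θ : ℝ, zdi A ≤ iNonneg (matRe (Complex.exp (-(θ : ℂ) * Complex.I) • A)) :=
  zdi_eq_min_iNonneg_general A
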